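/- Let γ = (2/(√25 + √1))² = 1/9 and β = ((√25 − √1)/(√25 + √1))² = 4/9. There exist a function f : ℝ → ℝ that is 1-strongly convex and 25-smooth, and initial points x_0, x_1 ∈ ℝ, such that the heavy-ball sequence x_{t+1} = x_t + β(x_t − x_{t−1}) − γ f'(x_t) is 3-cyclic and non-constant (x_{t+3} = x_t for all t and the sequence is not constant); in particular heavy-ball with these parameters fails to converge on this function. -/

import Mathlib

/-!
On a cycle `0, -2, 1, 0, …` the heavy-ball recurrence prescribes `f'` at three points, namely
`(2 - β) / γ`, `-(3 + 2 * β) / γ` and `(1 + 3 * β) / γ` at `0`, `-2` and `1`. Interpolating these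
values by a function that is affine on each side of `0` gives the slopes `(5 + β) / (2 * γ)` on the
left and `(4 * β - 1) / γ` on the right, and `f` has the required convexity and smoothness as soon
as both slopes lie between the two constants. For `γ = 1 / 9` and `β = 4 / 9` they are `49 / 2` and
`7`.
-/

open Filter Function Set Topology
open scoped NNReal

/-- The heavy-ball recurrence with step size `γ` and momentum `β`, for the gradient field `g`. It is
indexed so as to avoid subtraction in `ℕ`: the two initial points are `x 0` and `x 1`. -/
def IsHeavyBallOrbit {E : Type*} [AddCommGroup E] [Module ℝ E] (γ β : ℝ) (g : E → E) (x : ℕ → E) :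
    Prop :=
  ∀ t, x (t + 2) = x (t + 1) + β • (x (t + 1) - x t) - γ • g (x (t + 1))

theorem isHeavyBallOrbit_of_periodic {E : Type*} [AddCommGroup E] [Module ℝ E] {γ β : ℝ}
    {g : E → E} {x : ℕ → E} {n : ℕ} (hn : 0 < n) (hx : Periodic x n)
    (h : ∀ t < n, x (t + 2) = x (t + 1) + β • (x (t + 1) - x t) - γ • g (x (t + 1))) :
    IsHeavyBallOrbit γ β g x := by
  have shift_mod (t k : ℕ) : x (t % n + k) = x (t + k) := by
    rw [← hx.map_mod_nat (t % n + k), Nat.mod_add_mod, hx.map_mod_nat]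
  intro t
  simpa only [shift_mod, hx.map_mod_nat] using h (t % n) (Nat.mod_lt t hn)

theorem eq_of_periodic_of_tendsto {X : Type*} [TopologicalSpace X] [T2Space X] {x : ℕ → X} {n : ℕ}
    {l : X} (hn : 0 < n) (hx : Periodic x n) (hl : Tendsto x atTop (𝓝 l)) (s : ℕ) : x s = l := by
  have hsub : Tendsto (fun k : ℕ => s + k * n) atTop atTop :=
    tendsto_atTop_mono (fun _ => Nat.le_add_left _ s) (tendsto_id.atTop_mul_const' hn)
  have hconst : (x ∘ fun k : ℕ => s + k * n) = fun _ => x s := funext fun k => hx.nat_mul k s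
  exact tendsto_nhds_unique tendsto_const_nhds (hconst ▸ hl.comp hsub)

theorem convexOn_sub_half_mul_sq {f f' : ℝ → ℝ} {μ : ℝ} (hf : ∀ z, HasDerivAt f (f' z) z)
    (hmono : Monotone fun z => f' z - μ * z) :
    ConvexOn ℝ univ fun z => f z - μ / 2 * z ^ 2 := by
  have hderiv (z : ℝ) : HasDerivAt (fun z => f z - μ / 2 * z ^ 2) (f' z - μ * z) z :=
    ((hf z).sub ((hasDerivAt_pow 2 z).const_mul (μ / 2))).congr_deriv (by ring)
  refine Monotone.convexOn_univ_of_deriv (fun z => (hderiv z).differentiableAt) ?_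
  rwa [funext fun z => (hderiv z).deriv]

theorem lipschitzWith_of_monotone_of_monotone_sub {g : ℝ → ℝ} {L : ℝ≥0} (hg : Monotone g)
    (hLg : Monotone fun z => L * z - g z) : LipschitzWith L g := by
  refine LipschitzWith.of_le_add_mul L fun a b => ?_
  rcases le_total a b with hab | hba
  · exact (hg hab).trans (le_add_of_nonneg_right (by positivity))
  · rw [Real.dist_eq, abs_of_nonneg (sub_nonneg.2 hba)]
    linarith [hLg hba]

theorem hasDerivAt_posPart_sq (z : ℝ) : HasDerivAt (fun z : ℝ => z⁺ ^ 2) (2 * z⁺) z := by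
  refine hasDerivAt_of_hasDerivAt_of_ne' (x := 0) (fun y hy => ?_)
    (continuous_posPart.pow 2).continuousAt (continuous_posPart.const_mul 2).continuousAt z
  rcases hy.lt_or_gt with hneg | hpos
  · have heq : (fun z : ℝ => z⁺ ^ 2) =ᶠ[𝓝 y] fun _ => 0 := by
      filter_upwards [Iio_mem_nhds hneg] with w hw
      rw [posPart_of_nonpos (le_of_lt hw), zero_pow two_ne_zero]
    rw [posPart_of_nonpos hneg.le, mul_zero]
    exact (hasDerivAt_const y 0).congr_of_eventuallyEq heq
  · have heq : (fun z : ℝ => z⁺ ^ 2) =ᶠ[𝓝 y] fun z => z ^ 2 := by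
      filter_upwards [Ioi_mem_nhds hpos] with w hw
      rw [posPart_of_nonneg (le_of_lt hw)]
    rw [posPart_of_nonneg hpos.le]
    exact ((hasDerivAt_pow 2 y).congr_of_eventuallyEq heq).congr_deriv (by ring)

theorem hasDerivAt_negPart_sq (z : ℝ) : HasDerivAt (fun z : ℝ => z⁻ ^ 2) (-(2 * z⁻)) z := by
  simpa only [comp_def, posPart_neg, mul_neg_one] using
    (hasDerivAt_posPart_sq (-z)).comp z (hasDerivAt_neg z)

/-- The piecewise affine function with value `c` at `0`, slope `p` on the negative half-line and
slope `q` on the positive half-line; it serves as the gradient of the counterexample. -/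
def kinkedLine (c p q z : ℝ) : ℝ :=
  c - p * z⁻ + q * z⁺

/-- The primitive of `kinkedLine c p q` vanishing at `0`: two parabolas glued at `0`. -/
noncomputable def kinkedParabola (c p q z : ℝ) : ℝ :=
  c * z + p / 2 * z⁻ ^ 2 + q / 2 * z⁺ ^ 2

theorem hasDerivAt_kinkedParabola (c p q z : ℝ) :
    HasDerivAt (kinkedParabola c p q) (kinkedLine c p q z) z :=
  ((((hasDerivAt_id z).const_mul c).add ((hasDerivAt_negPart_sq z).const_mul (p / 2))).add
    ((hasDerivAt_posPart_sq z).const_mul (q / 2))).congr_deriv (by rw [kinkedLine]; ring)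

theorem monotone_kinkedLine (c : ℝ) {p q : ℝ} (hp : 0 ≤ p) (hq : 0 ≤ q) :
    Monotone (kinkedLine c p q) := by
  intro a b hab
  have hneg : p * b⁻ ≤ p * a⁻ := mul_le_mul_of_nonneg_left (negPart_anti hab) hp
  have hpos : q * a⁺ ≤ q * b⁺ := mul_le_mul_of_nonneg_left (posPart_mono hab) hq
  simp only [kinkedLine]
  linarith

theorem kinkedLine_sub_mul (c p q μ z : ℝ) :
    kinkedLine c p q z - μ * z = kinkedLine c (p - μ) (q - μ) z := by
  simp only [kinkedLine]
  linear_combination μ * posPart_sub_negPart z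

theorem mul_sub_kinkedLine (c p q L z : ℝ) :
    L * z - kinkedLine c p q z = kinkedLine (-c) (L - p) (L - q) z := by
  simp only [kinkedLine]
  linear_combination -L * posPart_sub_negPart z

theorem convexOn_kinkedParabola_sub (c : ℝ) {p q μ : ℝ} (hp : μ ≤ p) (hq : μ ≤ q) :
    ConvexOn ℝ univ fun z => kinkedParabola c p q z - μ / 2 * z ^ 2 := by
  refine convexOn_sub_half_mul_sq (hasDerivAt_kinkedParabola c p q) ?_
  simpa only [kinkedLine_sub_mul] using
    monotone_kinkedLine c (sub_nonneg.2 hp) (sub_nonneg.2 hq)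

theorem lipschitzWith_kinkedLine (c : ℝ) {p q : ℝ} {L : ℝ≥0} (hp : p ∈ Icc 0 (L : ℝ))
    (hq : q ∈ Icc 0 (L : ℝ)) : LipschitzWith L (kinkedLine c p q) := by
  refine lipschitzWith_of_monotone_of_monotone_sub (monotone_kinkedLine c hp.1 hq.1) ?_
  simpa only [mul_sub_kinkedLine] using
    monotone_kinkedLine (-c) (sub_nonneg.2 hp.2) (sub_nonneg.2 hq.2)

/-- The 3-periodic sequence `0, -2, 1, 0, -2, 1, …` followed by heavy-ball in the
counterexample. -/
def threeCycle (t : ℕ) : ℝ :=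
  ![0, -2, 1] (Fin.ofNat 3 t)

theorem periodic_threeCycle : Periodic threeCycle 3 := fun t => by
  simp only [threeCycle, Fin.ofNat, Nat.add_mod_right]

theorem threeCycle_zero_ne_one : threeCycle 0 ≠ threeCycle 1 := by
  simp [threeCycle, Fin.ofNat]

theorem isHeavyBallOrbit_threeCycle {γ : ℝ} (hγ : γ ≠ 0) (β : ℝ) :
    IsHeavyBallOrbit γ β
      (kinkedLine ((2 - β) / γ) ((5 + β) / (2 * γ)) ((4 * β - 1) / γ)) threeCycle := by
  set g := kinkedLine ((2 - β) / γ) ((5 + β) / (2 * γ)) ((4 * β - 1) / γ) with hg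
  have grad_zero : γ * g 0 = 2 - β := by
    rw [hg, kinkedLine, negPart_zero, posPart_zero]
    field_simp
    ring
  have grad_neg_two : γ * g (-2) = -(3 + 2 * β) := by
    rw [hg, kinkedLine, negPart_of_nonpos (by norm_num), posPart_of_nonpos (by norm_num)]
    field_simp
    ring
  have grad_one : γ * g 1 = 1 + 3 * β := by
    rw [hg, kinkedLine, negPart_of_nonneg zero_le_one, posPart_of_nonneg zero_le_one]
    field_simp
    ring
  refine isHeavyBallOrbit_of_periodic three_pos periodic_threeCycle fun t ht => ?_
  simp only [smul_eq_mul]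
  interval_cases t
  · change (1 : ℝ) = -2 + β * (-2 - 0) - γ * g (-2)
    linear_combination grad_neg_two
  · change (0 : ℝ) = 1 + β * (1 - -2) - γ * g 1
    linear_combination grad_one
  · change (-2 : ℝ) = 0 + β * (0 - 1) - γ * g 0
    linear_combination grad_zero

theorem heavy_ball_three_cycle_general {γ β μ : ℝ} {L : ℝ≥0} (hγ : 0 < γ) (hμ : 0 ≤ μ)
    (hβ : β ≤ 1) (hμβ : μ * γ ≤ 4 * β - 1) (hβL : 5 + β ≤ L * (2 * γ)) :
    ∃ (f : ℝ → ℝ) (x : ℕ → ℝ),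
      Differentiable ℝ f ∧
      ConvexOn ℝ univ (fun z => f z - μ / 2 * z ^ 2) ∧
      LipschitzWith L (deriv f) ∧
      (∀ t, 1 ≤ t → x (t + 1) = x t + β * (x t - x (t - 1)) - γ * deriv f (x t)) ∧
      (∀ t, x (t + 3) = x t) ∧
      (∃ s t, x s ≠ x t) ∧
      ¬∃ l, Tendsto x atTop (𝓝 l) := by
  set p := (5 + β) / (2 * γ)
  set q := (4 * β - 1) / γ
  have hpL : p ≤ L := (div_le_iff₀ (by positivity)).2 hβL
  have hμq : μ ≤ q := (le_div_iff₀ hγ).2 hμβ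
  have hqp : q ≤ p := (div_le_div_iff₀ hγ (by positivity)).2 <| by
    linarith [mul_le_mul_of_nonneg_right hβ hγ.le]
  have hderiv : deriv (kinkedParabola ((2 - β) / γ) p q) = kinkedLine ((2 - β) / γ) p q :=
    funext fun z => (hasDerivAt_kinkedParabola _ p q z).deriv
  refine ⟨kinkedParabola ((2 - β) / γ) p q, threeCycle,
    fun z => (hasDerivAt_kinkedParabola _ p q z).differentiableAt,
    convexOn_kinkedParabola_sub _ (hμq.trans hqp) hμq, ?_, ?_, periodic_threeCycle,
    ⟨0, 1, threeCycle_zero_ne_one⟩, ?_⟩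
  · rw [hderiv]
    exact lipschitzWith_kinkedLine _ ⟨hμ.trans (hμq.trans hqp), hpL⟩
      ⟨hμ.trans hμq, hqp.trans hpL⟩
  · intro t ht
    obtain ⟨t, rfl⟩ := Nat.exists_eq_add_of_le' ht
    rw [hderiv]
    exact isHeavyBallOrbit_threeCycle hγ.ne' β t
  · rintro ⟨l, hl⟩
    have limit_eq := eq_of_periodic_of_tendsto three_pos periodic_threeCycle hl
    exact threeCycle_zero_ne_one ((limit_eq 0).trans (limit_eq 1).symm)

/-- (Lessard et al.'s counterexample.) With
`γ = (2/(√25 + √1))² = 1/9` and `β = ((√25 - √1)/(√25 + √1))² = 4/9`, there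
exist a `1`-strongly convex, `25`-smooth function `f : ℝ → ℝ` and initial
points such that the heavy-ball trajectory is 3-cyclic and non-constant; in
particular it fails to converge. -/
theorem heavy_ball_three_cycle (γ β : ℝ)
    (hγ : γ = (2 / (Real.sqrt 25 + Real.sqrt 1)) ^ 2)
    (hβ : β = ((Real.sqrt 25 - Real.sqrt 1) / (Real.sqrt 25 + Real.sqrt 1)) ^ 2) :
    ∃ (f : ℝ → ℝ) (x : ℕ → ℝ),
      Differentiable ℝ f ∧
      ConvexOn ℝ Set.univ (fun z => f z - 1 / 2 * z ^ 2) ∧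
      LipschitzWith 25 (deriv f) ∧
      (∀ t, 1 ≤ t → x (t + 1) = x t + β * (x t - x (t - 1)) - γ * deriv f (x t)) ∧
      (∀ t, x (t + 3) = x t) ∧
      (∃ s t, x s ≠ x t) ∧
      ¬∃ l, Filter.Tendsto x Filter.atTop (nhds l) := by
  have sqrt_25 : Real.sqrt 25 = 5 := by
    rw [show (25 : ℝ) = 5 ^ 2 by norm_num, Real.sqrt_sq (by norm_num)]
  obtain rfl : γ = 1 / 9 := by rw [hγ, sqrt_25, Real.sqrt_one]; norm_num
  obtain rfl : β = 4 / 9 := by rw [hβ, sqrt_25, Real.sqrt_one]; norm_num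
  apply heavy_ball_three_cycle_general <;> norm_num
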